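/- Let ε > 0, M > 0, T > 0, and let N be an integer with N ≥ 2. Then there exists a positive integer L = L(ε, M, T, N) with the following property: for every solution u of the defocusing NLS equation with initial data u₀ ∈ H^N satisfying ‖u₀‖_{H^N} ≤ M and û₀(n) = 0 for all |n| ≤ L, one has ‖u(t) − w(t)‖_{H^N} ≤ ε for all t ∈ [−T, T], where w(x,t) := e^{−i c t} Σ_{n∈ℤ} û₀(n) e^{−i 4π² n² t} e^{2πi n x} and c := 4 ∫₀¹ |u₀(x)|² dx. -/

import Mathlib

/-!
Data bounded in `H^N` with `N ≥ 2` and without modes `|n| ≤ L` have `H¹` norm at most `M / L`. The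
cubic term satisfies the tame estimate `‖|u|²u‖_{H^N} ≤ C ‖u‖_{H¹}² ‖u‖_{H^N}` (`exists_NL_bound`),
so as long as the `H¹` norm stays below a small `a` and the `H^N` norm below `M + 1`, Duhamel's
formula keeps `u` within `D a²` of the free Schrödinger flow in `H^N`, where
`D = 2 C (M + 1) T` (`duhamel_bound`). This error is quadratic in `a`; hence for `a` small and
`M / L < a / 2` it strictly improves both assumptions, and a continuity argument (`bootstrap`)
makes them hold on all of `[-T, T]`.

The modified flow `w` is itself close to the free flow: `c = 4 ‖u₀‖²_{L²} ≤ 4 (M / L)²`, so the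
phase `e^{-ict}` is within `O(T L⁻²)` of `1` (`hnorm_sub_wflow_le`). Thus both `u` and `w` are
approximated by the free flow, and no normal form is needed.

Duhamel's formula is used as a mean value inequality for the coefficients of `e^{-it∂ₓ²} u(t)`,
which are differentiable one by one, although `u` is differentiable only in `H^{N-2}`
(`hnorm_sub_le_of_deriv`). The estimates of the cubic term are done in `[0, ∞]`, where sums need no
summability hypotheses.
-/

open Filter Complex

noncomputable section

/-- The weight `⟨n⟩ = max(1, |n|)` as a real number. -/
def jap (n : ℤ) : ℝ := max 1 |(n : ℝ)|

/-- The `n`-th summand of the squared `H^s` norm of a sequence of Fourier coefficients. -/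
def sobTerm (s : ℝ) (z : ℤ → ℂ) (n : ℤ) : ℝ := jap n ^ (2 * s) * ‖z n‖ ^ 2

/-- Membership in the Sobolev space `H^s` on the circle, where a distribution is
identified with its sequence of Fourier coefficients `(û(n))_{n ∈ ℤ}`. -/
def InH (s : ℝ) (z : ℤ → ℂ) : Prop := Summable (sobTerm s z)

/-- The `H^s` norm `(∑ ⟨n⟩^{2s} |û(n)|²)^{1/2}`. -/
def hnorm (s : ℝ) (z : ℤ → ℂ) : ℝ := Real.sqrt (∑' n, sobTerm s z n)

/-- Continuity of a curve `t ↦ z(t)` with values in `H^s`. -/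
def HCont (s : ℝ) (z : ℝ → ℤ → ℂ) : Prop :=
  ∀ t₀ : ℝ, Tendsto (fun t => hnorm s (fun n => z t n - z t₀ n)) (nhds t₀) (nhds 0)

/-- `z'` is the derivative at time `t₀` of the curve `t ↦ z(t)` in `H^s`. -/
def HDerivAt (s : ℝ) (z : ℝ → ℤ → ℂ) (z' : ℤ → ℂ) (t₀ : ℝ) : Prop :=
  Tendsto (fun t => hnorm s (fun n => z t n - z t₀ n - (t - t₀) • z' n) / |t - t₀|)
    (nhdsWithin t₀ {t₀}ᶜ) (nhds 0)

/-- The `n`-th Fourier coefficient of `|u|² u`, where `z` is the sequence of Fourier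
coefficients of `u`. -/
def NLterm (z : ℤ → ℂ) (n : ℤ) : ℂ :=
  ∑' p : ℤ × ℤ, z p.1 * z p.2 * (starRingEnd ℂ) (z (p.1 + p.2 - n))

/-- `∫₀¹ |u(x)|² dx` expressed via Parseval's identity through the Fourier
coefficients `z` of `u`. -/
def l2sq (z : ℤ → ℂ) : ℝ := ∑' n, ‖z n‖ ^ 2

/-- `z : ℝ → (ℤ → ℂ)` (a curve of sequences of Fourier coefficients) is a solution of the
defocusing NLS equation `i ∂ₜ u = -∂ₓ² u + 2 |u|² u` on the circle with initial data `z₀ ∈ H^σ`: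
it is continuous as a curve in `H^σ`, continuously differentiable as a curve in `H^{σ-2}`,
and satisfies `∂ₜ u = i ∂ₓ² u - 2 i |u|² u` in `H^{σ-2}` for all times, where on the Fourier
side `∂ₓ²` is multiplication by `-4π²n²`. -/
def IsNLSSolution (σ : ℝ) (z : ℝ → ℤ → ℂ) (z₀ : ℤ → ℂ) : Prop :=
  z 0 = z₀ ∧ (∀ t, InH σ (z t)) ∧ HCont σ z ∧
  ∃ z' : ℝ → ℤ → ℂ,
    (∀ t, InH (σ - 2) (z' t)) ∧ (∀ t, HDerivAt (σ - 2) z (z' t) t) ∧ HCont (σ - 2) z' ∧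
    ∀ t n, z' t n =
      Complex.I * (-(4 * (Real.pi : ℂ) ^ 2 * (n : ℂ) ^ 2)) * z t n
        - 2 * Complex.I * NLterm (z t) n

/-- The nearly linear flow `v(t) = ∑ₙ û₀(n) e^{-i ωₙ t} e^{2πinx}`, on the Fourier side. -/
def vflow (z₀ : ℤ → ℂ) (ω : ℤ → ℝ) (t : ℝ) (n : ℤ) : ℂ :=
  Complex.exp (-Complex.I * (ω n : ℂ) * (t : ℂ)) * z₀ n

/-- The modified linear Schrödinger flow
`w(t) = e^{-ict} ∑ₙ û₀(n) e^{-i 4π²n² t} e^{2πinx}` with `c = 4 ∫₀¹ |u₀|² dx`,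
on the Fourier side. -/
def wflow (z₀ : ℤ → ℂ) (t : ℝ) (n : ℤ) : ℂ :=
  Complex.exp (-Complex.I * (4 * (l2sq z₀ : ℂ)) * (t : ℂ)) *
    Complex.exp (-Complex.I * (4 * (Real.pi : ℂ) ^ 2 * (n : ℂ) ^ 2) * (t : ℂ)) * z₀ n

/-- Weak convergence in the Sobolev sequence space `𝔥^s`: testing against every `y ∈ 𝔥^s`
with the `𝔥^s` inner product. -/
def WeakConv (s : ℝ) (z : ℕ → ℤ → ℂ) (zl : ℤ → ℂ) : Prop :=
  ∀ y : ℤ → ℂ, InH s y →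
    Tendsto (fun j => ∑' n : ℤ, ((jap n ^ (2 * s) : ℝ) : ℂ) * ((starRingEnd ℂ) (y n) * z j n))
      atTop (nhds (∑' n : ℤ, ((jap n ^ (2 * s) : ℝ) : ℂ) * ((starRingEnd ℂ) (y n) * zl n)))


/-! ### The trilinear estimate -/

open scoped ENNReal in
theorem ennreal_two_mul_le (a b : ℝ≥0∞) : 2 * a * b ≤ a ^ 2 + b ^ 2 := by
  wlog h : a ≤ b generalizing a b
  · have := this b a (le_of_not_ge h)
    rwa [add_comm, mul_right_comm]
  obtain ⟨c, rfl⟩ := exists_add_of_le h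
  calc 2 * a * (a + c) ≤ 2 * a * (a + c) + c ^ 2 := le_self_add
    _ = _ := by ring

open scoped ENNReal in
/-- Weighted Cauchy–Schwarz inequality, with weights `w`. -/
theorem sq_tsum_mul_le {ι : Type*} (w f : ι → ℝ≥0∞) :
    (∑' i, w i * f i) ^ 2 ≤ (∑' i, w i) * ∑' i, w i * f i ^ 2 := by
  have h : 2 * (∑' i, w i * f i) ^ 2 ≤ 2 * ((∑' i, w i) * ∑' i, w i * f i ^ 2) := by
    calc 2 * (∑' i, w i * f i) ^ 2
        = ∑' i, ∑' j, w i * w j * (2 * f i * f j) := by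
          rw [sq, ← ENNReal.tsum_mul_right, ← ENNReal.tsum_mul_left]
          refine tsum_congr fun i => ?_
          rw [← ENNReal.tsum_mul_left, ← ENNReal.tsum_mul_left]
          exact tsum_congr fun j => by ring
      _ ≤ ∑' i, ∑' j, w i * w j * (f i ^ 2 + f j ^ 2) := by
          gcongr with i j
          exact ennreal_two_mul_le _ _
      _ = (∑' i, ∑' j, w j * (w i * f i ^ 2)) + ∑' i, ∑' j, w i * (w j * f j ^ 2) := by
          rw [← ENNReal.tsum_add]
          refine tsum_congr fun i => ?_
          rw [← ENNReal.tsum_add]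
          exact tsum_congr fun j => by ring
      _ = 2 * ((∑' i, w i) * ∑' i, w i * f i ^ 2) := by
          simp only [ENNReal.tsum_mul_left, ENNReal.tsum_mul_right]
          ring
  exact (ENNReal.mul_le_mul_iff_right (by norm_num) (by norm_num)).1 h

open scoped ENNReal in
theorem tsum_shift (F : ℤ → ℝ≥0∞) (a : ℤ) : ∑' n, F (a - n) = ∑' n, F n :=
  (Equiv.subLeft a).tsum_eq F

open scoped ENNReal in
theorem tsum_shift' (F : ℤ → ℝ≥0∞) (a b : ℤ) : ∑' n, F (n + a - b) = ∑' n, F n := by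
  have := (Equiv.addRight (a - b)).tsum_eq F
  simpa [add_sub_assoc] using this

open scoped ENNReal in
/-- Young's inequality `ℓ² * ℓ¹ * ℓ¹ ⊆ ℓ²` for the trilinear convolution of the cubic nonlinearity,
with the `ℓ²` factor in the first slot. It follows from Cauchy–Schwarz for fixed `n`, with the two
`ℓ¹` factors as weight, and Tonelli. -/
theorem tri_first (B A : ℤ → ℝ≥0∞) :
    ∑' n, (∑' p : ℤ × ℤ, B p.1 * A p.2 * A (p.1 + p.2 - n)) ^ 2
      ≤ (∑' n, A n) ^ 4 * ∑' n, B n ^ 2 := by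
  calc _ ≤ ∑' n : ℤ, (∑' p : ℤ × ℤ, A p.2 * A (p.1 + p.2 - n)) *
          ∑' p : ℤ × ℤ, A p.2 * A (p.1 + p.2 - n) * B p.1 ^ 2 := by
        gcongr with n
        refine le_trans (le_of_eq ?_) (sq_tsum_mul_le _ _)
        congr 1
        exact tsum_congr fun p => by ring
    _ = (∑' n, A n) ^ 2 * ∑' n : ℤ, ∑' p : ℤ × ℤ, A p.2 * A (p.1 + p.2 - n) * B p.1 ^ 2 := by
        rw [← ENNReal.tsum_mul_left]
        refine tsum_congr fun n => ?_
        congr 1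
        rw [ENNReal.tsum_prod', ENNReal.tsum_comm]
        simp only [ENNReal.tsum_mul_left, tsum_shift', ENNReal.tsum_mul_right]
        ring
    _ = _ := by
        rw [ENNReal.tsum_comm, ENNReal.tsum_prod']
        simp only [ENNReal.tsum_mul_left, tsum_shift, ENNReal.tsum_mul_right]
        ring

open scoped ENNReal in
theorem tri_second (B A : ℤ → ℝ≥0∞) :
    ∑' n, (∑' p : ℤ × ℤ, A p.1 * B p.2 * A (p.1 + p.2 - n)) ^ 2
      ≤ (∑' n, A n) ^ 4 * ∑' n, B n ^ 2 := by
  refine le_trans (le_of_eq ?_) (tri_first B A)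
  refine tsum_congr fun n => ?_
  rw [← (Equiv.prodComm ℤ ℤ).tsum_eq]
  congr 1
  refine tsum_congr fun p => ?_
  simp only [Equiv.prodComm_apply, Prod.fst_swap, Prod.snd_swap]
  rw [add_comm p.2, mul_comm (A p.2)]

open scoped ENNReal in
theorem tri_third (B A : ℤ → ℝ≥0∞) :
    ∑' n, (∑' p : ℤ × ℤ, A p.1 * A p.2 * B (p.1 + p.2 - n)) ^ 2
      ≤ (∑' n, A n) ^ 4 * ∑' n, B n ^ 2 := by
  calc _ ≤ ∑' n : ℤ, (∑' p : ℤ × ℤ, A p.1 * A p.2) *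
          ∑' p : ℤ × ℤ, A p.1 * A p.2 * B (p.1 + p.2 - n) ^ 2 := by
        gcongr with n
        exact sq_tsum_mul_le _ _
    _ = (∑' p : ℤ × ℤ, A p.1 * A p.2) * ∑' n : ℤ, ∑' p : ℤ × ℤ,
          A p.1 * A p.2 * B (p.1 + p.2 - n) ^ 2 := ENNReal.tsum_mul_left
    _ = _ := by
        rw [ENNReal.tsum_comm, ENNReal.tsum_prod', ENNReal.tsum_prod']
        simp only [ENNReal.tsum_mul_left, tsum_shift (fun n => B n ^ 2), ENNReal.tsum_mul_right]
        ring

theorem one_le_jap (n : ℤ) : 1 ≤ jap n := le_max_left _ _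
theorem jap_pos (n : ℤ) : 0 < jap n := lt_of_lt_of_le one_pos (one_le_jap n)

/-- The weight `⟨n⟩^s` of an output frequency `n = p + q - m` is controlled by the sum of the
three input weights, because `⟨n⟩ ≤ 3 max(⟨p⟩, ⟨q⟩, ⟨m⟩)`. -/
theorem jap_rpow_le (s : ℝ) (hs : 0 ≤ s) (p q n : ℤ) :
    jap n ^ s ≤ 3 ^ s * (jap p ^ s + jap q ^ s + jap (p + q - n) ^ s) := by
  set m := p + q - n with hm
  have hn : (n : ℝ) = p + q - m := by rw [hm]; push_cast; ring
  have h3 : jap n ≤ 3 * max (max (jap p) (jap q)) (jap m) := by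
    have h1 : |(p : ℝ)| ≤ jap p := le_max_right _ _
    have h2 : |(q : ℝ)| ≤ jap q := le_max_right _ _
    have h4 : |(m : ℝ)| ≤ jap m := le_max_right _ _
    have h5 : jap p ≤ max (max (jap p) (jap q)) (jap m) := by simp
    have h6 : jap q ≤ max (max (jap p) (jap q)) (jap m) := by simp
    have h7 : jap m ≤ max (max (jap p) (jap q)) (jap m) := by simp
    have := one_le_jap p
    rw [abs_le] at h1 h2 h4
    refine max_le (by linarith) ?_
    rw [hn, abs_le]
    constructor <;> linarith
  have hp := jap_pos p
  have hq := jap_pos q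
  have hm := jap_pos m
  calc jap n ^ s ≤ (3 * max (max (jap p) (jap q)) (jap m)) ^ s :=
        Real.rpow_le_rpow (jap_pos n).le h3 hs
    _ = 3 ^ s * (max (max (jap p) (jap q)) (jap m)) ^ s :=
        Real.mul_rpow (by norm_num) (by positivity)
    _ ≤ _ := by
        gcongr
        have := Real.rpow_nonneg hp.le s
        have := Real.rpow_nonneg hq.le s
        have := Real.rpow_nonneg hm.le s
        rcases max_choice (max (jap p) (jap q)) (jap m) with h | h <;> rw [h]
        · rcases max_choice (jap p) (jap q) with h | h <;> rw [h] <;> linarith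
        · linarith

open scoped ENNReal in
/-- The `H^s` norm squared, valued in `[0, ∞]` so that it is meaningful for every sequence. -/
def eH (s : ℝ) (z : ℤ → ℂ) : ℝ≥0∞ := ∑' n, (ENNReal.ofReal (jap n ^ s) * ‖z n‖ₑ) ^ 2

theorem sobTerm_nonneg (s : ℝ) (z : ℤ → ℂ) (n : ℤ) : 0 ≤ sobTerm s z n := by
  have := jap_pos n
  unfold sobTerm; positivity

theorem sobTerm_eq_sq (s : ℝ) (z : ℤ → ℂ) (n : ℤ) : sobTerm s z n = (jap n ^ s * ‖z n‖) ^ 2 := by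
  rw [sobTerm, mul_pow, ← Real.rpow_mul_natCast (jap_pos n).le, mul_comm 2 s]; norm_num

theorem eH_eq_tsum (s : ℝ) (z : ℤ → ℂ) : eH s z = ∑' n, ENNReal.ofReal (sobTerm s z n) := by
  refine tsum_congr fun n => ?_
  have := jap_pos n
  rw [sobTerm_eq_sq, ENNReal.ofReal_pow (by positivity), ENNReal.ofReal_mul (by positivity),
    ofReal_norm]

theorem inH_of_eH_ne_top {s : ℝ} {z : ℤ → ℂ} (h : eH s z ≠ ⊤) : InH s z := by
  rw [eH_eq_tsum] at h
  have := ENNReal.summable_toReal h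
  simp only [ENNReal.toReal_ofReal (sobTerm_nonneg s z _)] at this
  exact this

theorem hnorm_nonneg (s : ℝ) (z : ℤ → ℂ) : 0 ≤ hnorm s z := Real.sqrt_nonneg _

theorem hnorm_sq (s : ℝ) (z : ℤ → ℂ) : hnorm s z ^ 2 = ∑' n, sobTerm s z n :=
  Real.sq_sqrt (tsum_nonneg (sobTerm_nonneg s z))

theorem eH_of_inH {s : ℝ} {z : ℤ → ℂ} (h : InH s z) : eH s z = ENNReal.ofReal (hnorm s z ^ 2) := by
  rw [eH_eq_tsum, hnorm_sq, ENNReal.ofReal_tsum_of_nonneg (sobTerm_nonneg s z) h]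

theorem summable_jap_inv_sq : Summable fun n : ℤ => (jap n ^ 2)⁻¹ := by
  have h : Summable fun n : ℤ => 1 / (n : ℝ) ^ 2 :=
    Real.summable_one_div_int_pow.2 (by norm_num)
  refine Summable.of_norm_bounded_eventually h ?_
  have h0 : ({0} : Set ℤ)ᶜ ∈ cofinite :=
    (Set.finite_singleton 0).compl_mem_cofinite
  filter_upwards [h0] with n hn
  have hn' : 0 < |(n : ℝ)| := by simpa using hn
  have hj : |(n : ℝ)| ≤ jap n := le_max_right _ _
  rw [Real.norm_of_nonneg (by have := jap_pos n; positivity), ← one_div, ← sq_abs (n : ℝ)]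
  gcongr

open scoped ENNReal in
/-- The embedding of `H¹` into the Wiener algebra `ℓ¹`, from `∑ ⟨n⟩⁻² < ∞`. -/
theorem sq_tsum_enorm_le (z : ℤ → ℂ) :
    (∑' n, ‖z n‖ₑ) ^ 2 ≤ ENNReal.ofReal (∑' n, (jap n ^ 2)⁻¹) * eH 1 z := by
  have hpos : ∀ n : ℤ, 0 < jap n := jap_pos
  rw [ENNReal.ofReal_tsum_of_nonneg (fun n => by have := hpos n; positivity) summable_jap_inv_sq]
  have key : ∀ n : ℤ, ENNReal.ofReal ((jap n ^ 2)⁻¹) * ENNReal.ofReal (jap n ^ 2) = 1 := by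
    intro n
    have := hpos n
    rw [← ENNReal.ofReal_mul (by positivity), inv_mul_cancel₀ (by positivity), ENNReal.ofReal_one]
  have := sq_tsum_mul_le (fun n : ℤ => ENNReal.ofReal ((jap n ^ 2)⁻¹))
    (fun n => ENNReal.ofReal (jap n ^ 2) * ‖z n‖ₑ)
  simp only [← mul_assoc, key, one_mul] at this
  refine this.trans (le_of_eq ?_)
  congr 1
  refine tsum_congr fun n => ?_
  rw [Real.rpow_one, mul_pow, sq (ENNReal.ofReal (jap n ^ 2)), ← mul_assoc, ← mul_assoc, key, one_mul,
    mul_pow, ENNReal.ofReal_pow (hpos n).le]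

open scoped ENNReal in
/-- Tame estimate for the cubic term: the weight falls on one factor, measured in `H^s`, and the
other two factors are measured in the Wiener algebra. -/
theorem eH_NLterm_le (s : ℝ) (hs : 0 ≤ s) (z : ℤ → ℂ) :
    eH s (NLterm z) ≤ ENNReal.ofReal (3 ^ s) ^ 2 * 9 * ((∑' n, ‖z n‖ₑ) ^ 4 * eH s z) := by
  set A : ℤ → ℝ≥0∞ := fun n => ‖z n‖ₑ with hA
  set W : ℤ → ℝ≥0∞ := fun n => ENNReal.ofReal (jap n ^ s) with hW
  set B : ℤ → ℝ≥0∞ := fun n => W n * A n with hB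
  set K : ℝ≥0∞ := ENNReal.ofReal (3 ^ s)
  have hWn : ∀ p q n : ℤ, W n ≤ K * (W p + W q + W (p + q - n)) := by
    intro p q n
    have hpos : ∀ n : ℤ, 0 ≤ jap n ^ s := fun n => Real.rpow_nonneg (jap_pos n).le s
    simp only [hW, K]
    rw [← ENNReal.ofReal_add (hpos _) (hpos _),
      ← ENNReal.ofReal_add (by linarith [hpos p, hpos q]) (hpos _),
      ← ENNReal.ofReal_mul (by positivity)]
    exact ENNReal.ofReal_le_ofReal (jap_rpow_le s hs p q n)
  let X : ℤ → ℝ≥0∞ := fun n => ∑' p : ℤ × ℤ, B p.1 * A p.2 * A (p.1 + p.2 - n)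
  let Y : ℤ → ℝ≥0∞ := fun n => ∑' p : ℤ × ℤ, A p.1 * B p.2 * A (p.1 + p.2 - n)
  let V : ℤ → ℝ≥0∞ := fun n => ∑' p : ℤ × ℤ, A p.1 * A p.2 * B (p.1 + p.2 - n)
  have hpt : ∀ n, W n * ‖NLterm z n‖ₑ ≤ K * (X n + Y n + V n) := by
    intro n
    calc W n * ‖NLterm z n‖ₑ
        ≤ W n * ∑' p : ℤ × ℤ, A p.1 * A p.2 * A (p.1 + p.2 - n) := by
          gcongr
          refine enorm_tsum_le_tsum_enorm.trans (le_of_eq (tsum_congr fun p => ?_))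
          simp [hA, enorm_mul]
      _ = ∑' p : ℤ × ℤ, W n * (A p.1 * A p.2 * A (p.1 + p.2 - n)) := ENNReal.tsum_mul_left.symm
      _ ≤ ∑' p : ℤ × ℤ, K * (W p.1 + W p.2 + W (p.1 + p.2 - n)) *
            (A p.1 * A p.2 * A (p.1 + p.2 - n)) := by
          gcongr with p
          exact hWn _ _ _
      _ = K * (X n + Y n + V n) := by
          simp only [X, Y, V]
          rw [← ENNReal.tsum_add, ← ENNReal.tsum_add, ← ENNReal.tsum_mul_left]
          exact tsum_congr fun p => by simp only [hB]; ring
  have h3 : ∀ a b c : ℝ≥0∞, (a + b + c) ^ 2 ≤ 3 * (a ^ 2 + b ^ 2 + c ^ 2) := by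
    intro a b c
    have h1 := ennreal_two_mul_le a b
    have h2 := ennreal_two_mul_le a c
    have h3 := ennreal_two_mul_le b c
    calc (a + b + c) ^ 2 = a ^ 2 + b ^ 2 + c ^ 2 + (2 * a * b + 2 * a * c + 2 * b * c) := by ring
      _ ≤ a ^ 2 + b ^ 2 + c ^ 2 + ((a ^ 2 + b ^ 2) + (a ^ 2 + c ^ 2) + (b ^ 2 + c ^ 2)) := by gcongr
      _ = _ := by ring
  calc eH s (NLterm z) ≤ ∑' n, K ^ 2 * (3 * (X n ^ 2 + Y n ^ 2 + V n ^ 2)) := by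
        unfold eH
        gcongr with n
        refine (pow_le_pow_left' (hpt n) 2).trans ?_
        rw [mul_pow]
        gcongr
        exact h3 _ _ _
    _ = K ^ 2 * (3 * (∑' n, X n ^ 2 + ∑' n, Y n ^ 2 + ∑' n, V n ^ 2)) := by
        rw [ENNReal.tsum_mul_left, ENNReal.tsum_mul_left, ENNReal.tsum_add, ENNReal.tsum_add]
    _ ≤ K ^ 2 * (3 * ((∑' n, A n) ^ 4 * ∑' n, B n ^ 2 + (∑' n, A n) ^ 4 * ∑' n, B n ^ 2
          + (∑' n, A n) ^ 4 * ∑' n, B n ^ 2)) := by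
        gcongr
        · exact tri_first B A
        · exact tri_second B A
        · exact tri_third B A
    _ = _ := by
        simp only [hB, hA, hW, eH]
        ring

theorem hnorm_le_of_eH {s : ℝ} {z : ℤ → ℂ} {b : ℝ} (hb : 0 ≤ b)
    (h : eH s z ≤ ENNReal.ofReal (b ^ 2)) : InH s z ∧ hnorm s z ≤ b := by
  have hin : InH s z := inH_of_eH_ne_top (ne_top_of_le_ne_top ENNReal.ofReal_ne_top h)
  refine ⟨hin, ?_⟩
  rw [eH_of_inH hin, ENNReal.ofReal_le_ofReal_iff (by positivity)] at h
  exact le_of_sq_le_sq h hb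

/-- Tame estimate `‖|u|²u‖_{H^s} ≤ C ‖u‖_{H¹}² ‖u‖_{H^s}`: it is linear in the strong norm, so a
small `H¹` norm makes the nonlinearity small in `H^s`. -/
theorem exists_NL_bound (s : ℝ) (hs : 0 ≤ s) :
    ∃ C : ℝ, 0 < C ∧ ∀ z : ℤ → ℂ, InH 1 z → InH s z →
      InH s (NLterm z) ∧ hnorm s (NLterm z) ≤ C * hnorm 1 z ^ 2 * hnorm s z := by
  set K : ℝ := ∑' n : ℤ, (jap n ^ 2)⁻¹
  have hK : 0 ≤ K := tsum_nonneg fun n => by have := jap_pos n; positivity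
  refine ⟨3 ^ s * 3 * (K + 1), by positivity, fun z h1 hz => ?_⟩
  have n1 := hnorm_nonneg 1 z
  have n2 := hnorm_nonneg s z
  refine hnorm_le_of_eH (by positivity) ((eH_NLterm_le s hs z).trans ?_)
  have hS : (∑' n, ‖z n‖ₑ) ^ 4 ≤ ENNReal.ofReal ((K * hnorm 1 z ^ 2) ^ 2) := by
    have := sq_tsum_enorm_le z
    rw [eH_of_inH h1, ← ENNReal.ofReal_mul hK] at this
    rw [ENNReal.ofReal_pow (by positivity), show (4:ℕ) = 2 * 2 from rfl, pow_mul]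
    exact pow_le_pow_left' this 2
  rw [eH_of_inH hz]
  calc _ ≤ ENNReal.ofReal (3 ^ s) ^ 2 * ENNReal.ofReal 9 * (ENNReal.ofReal ((K * hnorm 1 z ^ 2) ^ 2)
            * ENNReal.ofReal (hnorm s z ^ 2)) := by
        gcongr
        simp
    _ = ENNReal.ofReal ((3 ^ s * 3 * K * hnorm 1 z ^ 2 * hnorm s z) ^ 2) := by
        rw [← ENNReal.ofReal_pow (by positivity), ← ENNReal.ofReal_mul (by positivity),
          ← ENNReal.ofReal_mul (by positivity), ← ENNReal.ofReal_mul (by positivity)]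
        congr 1; ring
    _ ≤ _ := by
        gcongr
        linarith

/-! ### Sobolev norms of sequences and curves -/

theorem hnorm_le_of_sobTerm_le {s s' c : ℝ} (hc : 0 ≤ c) {x y : ℤ → ℂ} (hy : InH s' y)
    (h : ∀ n, sobTerm s x n ≤ c ^ 2 * sobTerm s' y n) : InH s x ∧ hnorm s x ≤ c * hnorm s' y := by
  have hx : InH s x := Summable.of_nonneg_of_le (sobTerm_nonneg s x) h (hy.mul_left _)
  refine ⟨hx, ?_⟩
  refine le_of_sq_le_sq ?_ (mul_nonneg hc (hnorm_nonneg _ _))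
  rw [mul_pow, hnorm_sq, hnorm_sq, ← tsum_mul_left]
  exact hx.tsum_le_tsum h (hy.mul_left _)

theorem sobTerm_congr_norm {s : ℝ} {x y : ℤ → ℂ} (h : ∀ n, ‖x n‖ = ‖y n‖) :
    sobTerm s x = sobTerm s y := by
  funext n; simp only [sobTerm, h]

theorem InH.congr_norm {s : ℝ} {x y : ℤ → ℂ} (hx : InH s x) (h : ∀ n, ‖y n‖ = ‖x n‖) :
    InH s y := by
  unfold InH; rw [sobTerm_congr_norm h]; exact hx

theorem hnorm_congr_norm {s : ℝ} {x y : ℤ → ℂ} (h : ∀ n, ‖x n‖ = ‖y n‖) :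
    hnorm s x = hnorm s y := by
  unfold hnorm; rw [sobTerm_congr_norm h]

theorem hnorm_mono {s s' : ℝ} (hs : s ≤ s') {x : ℤ → ℂ} (hx : InH s' x) :
    InH s x ∧ hnorm s x ≤ hnorm s' x := by
  have := hnorm_le_of_sobTerm_le (s := s) zero_le_one hx (x := x) fun n => ?_
  · simpa using this
  · rw [one_pow, one_mul]
    unfold sobTerm
    gcongr
    exact one_le_jap n

theorem hnorm_const_mul {s : ℝ} (a : ℂ) {x : ℤ → ℂ} (hx : InH s x) :
    InH s (fun n => a * x n) ∧ hnorm s (fun n => a * x n) ≤ ‖a‖ * hnorm s x := by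
  refine hnorm_le_of_sobTerm_le (norm_nonneg a) hx fun n => le_of_eq ?_
  simp only [sobTerm, norm_mul]
  ring

open scoped ENNReal in
/-- `H^s` is the weighted `ℓ²` space with weight `⟨n⟩^s`, which gives the triangle inequality below. -/
theorem memℓp_iff_inH (s : ℝ) (z : ℤ → ℂ) :
    Memℓp (fun n : ℤ => ((jap n ^ s : ℝ) : ℂ) * z n) 2 ↔ InH s z := by
  rw [memℓp_gen_iff (by norm_num)]
  refine summable_congr fun n => ?_
  have := jap_pos n
  rw [sobTerm_eq_sq, norm_mul, Complex.norm_of_nonneg (by positivity)]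
  norm_num

theorem hnorm_eq_norm {s : ℝ} {z : ℤ → ℂ}
    (h : Memℓp (fun n : ℤ => ((jap n ^ s : ℝ) : ℂ) * z n) 2) :
    hnorm s z = ‖(⟨_, h⟩ : lp (fun _ : ℤ => ℂ) 2)‖ := by
  rw [lp.norm_eq_tsum_rpow (by norm_num), hnorm, Real.sqrt_eq_rpow]
  norm_num
  congr 1
  refine tsum_congr fun n => ?_
  have := jap_pos n
  rw [sobTerm_eq_sq, abs_of_nonneg (Real.rpow_nonneg this.le s)]

theorem hnorm_add_le {s : ℝ} {x y : ℤ → ℂ} (hx : InH s x) (hy : InH s y) :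
    InH s (fun n => x n + y n) ∧ hnorm s (fun n => x n + y n) ≤ hnorm s x + hnorm s y := by
  have hx' := (memℓp_iff_inH s x).2 hx
  have hy' := (memℓp_iff_inH s y).2 hy
  have e : (fun n : ℤ => ((jap n ^ s : ℝ) : ℂ) * x n) + (fun n : ℤ => ((jap n ^ s : ℝ) : ℂ) * y n)
      = fun n : ℤ => ((jap n ^ s : ℝ) : ℂ) * (x n + y n) := by
    funext n; simp only [Pi.add_apply]; ring
  have hxy := e ▸ hx'.add hy'
  refine ⟨(memℓp_iff_inH s _).1 hxy, ?_⟩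
  rw [hnorm_eq_norm hx', hnorm_eq_norm hy', hnorm_eq_norm hxy]
  refine le_trans (le_of_eq ?_) (norm_add_le _ _)
  congr 1
  exact Subtype.ext e.symm

theorem hnorm_sub_le {s : ℝ} {x y : ℤ → ℂ} (hx : InH s x) (hy : InH s y) :
    InH s (fun n => x n - y n) ∧ hnorm s (fun n => x n - y n) ≤ hnorm s x + hnorm s y := by
  have hn : ∀ n, ‖-y n‖ = ‖y n‖ := fun n => norm_neg _
  have := hnorm_add_le hx (hy.congr_norm hn)
  rw [hnorm_congr_norm hn] at this
  simpa only [← sub_eq_add_neg] using this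

theorem norm_le_hnorm {s : ℝ} (hs : 0 ≤ s) {z : ℤ → ℂ} (hz : InH s z) (n : ℤ) :
    ‖z n‖ ≤ hnorm s z := by
  refine le_of_sq_le_sq ?_ (hnorm_nonneg _ _)
  rw [hnorm_sq]
  refine le_trans ?_ (hz.le_tsum n fun m _ => sobTerm_nonneg s z m)
  unfold sobTerm
  exact le_mul_of_one_le_left (by positivity) (Real.one_le_rpow (one_le_jap n) (by linarith))

/-- Differentiability in `H^s` with `s ≥ 0` implies differentiability of each Fourier coefficient. -/
theorem HDerivAt.hasDerivAt_coeff {s : ℝ} (hs : 0 ≤ s) {z : ℝ → ℤ → ℂ} {z' : ℤ → ℂ} {t₀ : ℝ}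
    (hz : ∀ t, InH s (z t)) (hz' : InH s z') (h : HDerivAt s z z' t₀) (n : ℤ) :
    HasDerivAt (fun t => z t n) (z' n) t₀ := by
  have : HasDerivWithinAt (fun t => z t n) (z' n) {t₀}ᶜ t₀ := by
    rw [hasDerivWithinAt_iff_tendsto]
    refine squeeze_zero (fun t => by positivity) (fun t => ?_) h
    rw [div_eq_inv_mul, Real.norm_eq_abs]
    gcongr
    have h1 := (hnorm_sub_le (hz t) (hz t₀)).1
    have h2 := (hnorm_const_mul (((t - t₀ : ℝ)) : ℂ) hz').1
    have h3 := (hnorm_sub_le h1 h2).1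
    exact norm_le_hnorm hs h3 n
  rwa [Set.compl_eq_univ_sdiff, hasDerivWithinAt_sdiff_singleton, hasDerivWithinAt_univ] at this

theorem HCont.continuous_hnorm {s s' : ℝ} (hs : s ≤ s') {z : ℝ → ℤ → ℂ} (hz : ∀ t, InH s' (z t))
    (h : HCont s' z) : Continuous fun t => hnorm s (z t) := by
  refine continuous_iff_continuousAt.2 fun t₀ => ?_
  rw [ContinuousAt, tendsto_iff_dist_tendsto_zero]
  refine squeeze_zero (fun _ => dist_nonneg) (fun t => ?_) (h t₀)
  have hd := (hnorm_sub_le (hz t) (hz t₀)).1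
  have hd' := hnorm_mono hs hd
  have h1 := (hnorm_mono hs (hz t)).1
  have h0 := (hnorm_mono hs (hz t₀)).1
  have a := (hnorm_add_le hd'.1 h0).2
  have b := (hnorm_sub_le h1 hd'.1).2
  simp only [sub_add_cancel, sub_sub_cancel] at a b
  rw [Real.dist_eq, abs_le]
  constructor <;> linarith [hd'.2]

/-- Mean value inequality in `H^s` for a curve that is only assumed differentiable coefficientwise.
Pairing a finite truncation of the increment with itself reduces it to the scalar mean value
inequality; the bound is uniform in the truncation. -/
theorem hnorm_sub_le_of_deriv {s B : ℝ} (hB : 0 ≤ B) {y g : ℝ → ℤ → ℂ} {τ : ℝ}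
    (hd : ∀ t n, HasDerivAt (fun t => y t n) (g t n) t)
    (hg : ∀ t ∈ Set.uIcc 0 τ, InH s (g t) ∧ hnorm s (g t) ≤ B) :
    InH s (fun n => y τ n - y 0 n) ∧ hnorm s (fun n => y τ n - y 0 n) ≤ B * |τ| := by
  set d : ℤ → ℂ := fun n => y τ n - y 0 n with hd_def
  have key : ∀ F : Finset ℤ, ∑ n ∈ F, sobTerm s d n ≤ (B * |τ|) ^ 2 := by
    intro F
    set X := ∑ n ∈ F, sobTerm s d n with hX
    have hX0 : 0 ≤ X := Finset.sum_nonneg fun n _ => sobTerm_nonneg s d n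
    let c : ℤ → ℂ := fun n => ((jap n ^ (2 * s) : ℝ) : ℂ) * (starRingEnd ℂ) (d n)
    have hφ : ∀ t, HasDerivAt (fun t => ∑ n ∈ F, c n * y t n) (∑ n ∈ F, c n * g t n) t :=
      fun t => HasDerivAt.fun_sum fun n _ => (hd t n).const_mul (c n)
    have hbound : ∀ t ∈ Set.uIcc 0 τ, ‖∑ n ∈ F, c n * g t n‖ ≤ √X * B := by
      intro t ht
      obtain ⟨hin, hle⟩ := hg t ht
      calc ‖∑ n ∈ F, c n * g t n‖
          ≤ ∑ n ∈ F, (jap n ^ s * ‖d n‖) * (jap n ^ s * ‖g t n‖) := by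
            refine (norm_sum_le _ _).trans (Finset.sum_le_sum fun n _ => le_of_eq ?_)
            have := jap_pos n
            rw [norm_mul, norm_mul, Complex.norm_of_nonneg (by positivity), RCLike.norm_conj,
              two_mul, Real.rpow_add this]
            ring
        _ ≤ √(∑ n ∈ F, (jap n ^ s * ‖d n‖) ^ 2) * √(∑ n ∈ F, (jap n ^ s * ‖g t n‖) ^ 2) :=
            Real.sum_mul_le_sqrt_mul_sqrt _ _ _
        _ ≤ √X * B := by
            simp only [← sobTerm_eq_sq]
            gcongr
            refine le_trans (Real.sqrt_le_sqrt ?_) hle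
            exact hin.sum_le_tsum F fun n _ => sobTerm_nonneg s (g t) n
    have hmv := (convex_uIcc (0 : ℝ) τ).norm_image_sub_le_of_norm_hasDerivWithin_le
      (fun t _ => (hφ t).hasDerivWithinAt) hbound Set.left_mem_uIcc Set.right_mem_uIcc
    have hval : ∑ n ∈ F, c n * y τ n - ∑ n ∈ F, c n * y 0 n = (X : ℂ) := by
      rw [← Finset.sum_sub_distrib, hX, Complex.ofReal_sum]
      refine Finset.sum_congr rfl fun n _ => ?_
      have := Complex.conj_mul' (d n)
      simp only [c, sobTerm]
      rw [← mul_sub, mul_assoc, show y τ n - y 0 n = d n from rfl, this]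
      push_cast
      rfl
    rw [hval, Complex.norm_of_nonneg hX0, sub_zero, Real.norm_eq_abs] at hmv
    have hs := Real.sq_sqrt hX0
    have hs0 := Real.sqrt_nonneg X
    have hBt : 0 ≤ B * |τ| := by positivity
    rw [← hs]
    refine pow_le_pow_left₀ hs0 ?_ 2
    by_contra hlt
    push Not at hlt
    nlinarith
  have hin : InH s d := summable_of_sum_le (sobTerm_nonneg s d) key
  refine ⟨hin, le_of_sq_le_sq ?_ (by positivity)⟩
  rw [hnorm_sq]
  exact hin.tsum_le_of_sum_le key

/-- Continuity argument starting from time `0` and running in both time directions. -/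
theorem bootstrap {f : ℝ → ℝ} (hf : Continuous f) (h0 : f 0 < 1) {T : ℝ}
    (h : ∀ τ, |τ| ≤ T → (∀ s ∈ Set.uIcc 0 τ, f s ≤ 1) → f τ < 1) {t : ℝ} (ht : |t| ≤ T) :
    ∀ s ∈ Set.uIcc 0 t, f s ≤ 1 := by
  by_contra! hcon
  obtain ⟨s₁, hs₁, hgt⟩ := hcon
  have hmul : ∀ (a θ : ℝ), θ ∈ Set.Icc (0 : ℝ) 1 → |θ * a| ≤ |a| := fun a θ hθ => by
    rw [abs_mul, abs_of_nonneg hθ.1]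
    exact mul_le_of_le_one_left (abs_nonneg a) hθ.2
  have hs₁T : |s₁| ≤ T := by
    refine le_trans ?_ ht
    have := Set.abs_sub_left_of_mem_uIcc hs₁
    simpa using this
  let k : ℝ → ℝ := fun θ => f (θ * s₁)
  have hk : Continuous k := by fun_prop
  have hk0 : k 0 < 1 := by simpa [k] using h0
  have hk1 : 1 < k 1 := by simpa [k] using hgt
  have hcomp : IsCompact (Set.Icc (0 : ℝ) 1 ∩ k ⁻¹' {1}) :=
    isCompact_Icc.inter_right (isClosed_singleton.preimage hk)
  have hne : (Set.Icc (0 : ℝ) 1 ∩ k ⁻¹' {1}).Nonempty := by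
    obtain ⟨θ, hθ, hθ1⟩ := intermediate_value_Icc zero_le_one hk.continuousOn ⟨hk0.le, hk1.le⟩
    exact ⟨θ, hθ, hθ1⟩
  obtain ⟨θ, ⟨hθ, hθ1⟩, hmin⟩ := hcomp.exists_isLeast hne
  have hθ1 : k θ = 1 := hθ1
  have hlow : ∀ η ∈ Set.Icc 0 θ, k η ≤ 1 := by
    intro η hη
    by_contra! hgt'
    obtain ⟨ξ, hξ, hξ1⟩ := intermediate_value_Icc hη.1 hk.continuousOn ⟨hk0.le, hgt'.le⟩
    have hle : θ ≤ ξ := hmin ⟨⟨hξ.1, hξ.2.trans (hη.2.trans hθ.2)⟩, hξ1⟩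
    have : η = θ := le_antisymm hη.2 (hle.trans hξ.2)
    rw [this, hθ1] at hgt'
    exact lt_irrefl _ hgt'
  have hfin := h (θ * s₁) ((hmul s₁ θ hθ).trans hs₁T) fun s hs => by
    rw [← segment_eq_uIcc, segment_eq_image] at hs
    obtain ⟨η, hη, rfl⟩ := hs
    have := hlow (η * θ) ⟨mul_nonneg hη.1 hθ.1, mul_le_of_le_one_left hθ.1 hη.2⟩
    simpa [k, mul_assoc] using this
  exact absurd hθ1 hfin.ne

/-! ### Comparison with the free flow -/

/-- Data without modes up to order `L` gain a factor `L⁻¹` in `H¹`; `s ≥ 2` leaves one spare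
derivative. -/
theorem hnorm_one_le_of_low_modes_zero {s : ℝ} (hs : 2 ≤ s) {x : ℤ → ℂ} (hx : InH s x) {L : ℕ}
    (hL : 0 < L) (h : ∀ n : ℤ, |n| ≤ (L : ℤ) → x n = 0) :
    hnorm 1 x ≤ 1 / L * hnorm s x := by
  have hL' : (0 : ℝ) < L := by exact_mod_cast hL
  refine (hnorm_le_of_sobTerm_le (by positivity) hx fun n => ?_).2
  by_cases hn : |n| ≤ (L : ℤ)
  · simp [sobTerm, h n hn]
  · have hLn : (L : ℝ) ≤ jap n := by
      refine le_trans ?_ (le_max_right _ _)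
      push Not at hn
      exact_mod_cast hn.le
    have hj := jap_pos n
    have h4 : jap n ^ (4 : ℝ) ≤ jap n ^ (2 * s) :=
      Real.rpow_le_rpow_of_exponent_le (one_le_jap n) (by linarith)
    have h4' : jap n ^ (4 : ℝ) = jap n ^ 2 * jap n ^ 2 := by
      rw [← pow_add]; exact_mod_cast Real.rpow_natCast (jap n) 4
    have h2 : jap n ^ (2 * 1 : ℝ) = jap n ^ 2 := by
      rw [mul_one]; exact_mod_cast Real.rpow_natCast (jap n) 2
    unfold sobTerm
    rw [h2, ← mul_assoc]
    gcongr
    rw [div_pow, one_pow, one_div, ← div_eq_inv_mul, le_div_iff₀ (by positivity)]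
    calc jap n ^ 2 * (L : ℝ) ^ 2 ≤ jap n ^ 2 * jap n ^ 2 := by gcongr
      _ ≤ _ := h4' ▸ h4

/-- The multiplier of the backward free flow `e^{-it∂ₓ²}` on the `n`-th mode. -/
def freeBack (t : ℝ) (n : ℤ) : ℂ :=
  Complex.exp (Complex.I * (4 * (Real.pi : ℂ) ^ 2 * (n : ℂ) ^ 2) * (t : ℂ))

theorem norm_freeBack (t : ℝ) (n : ℤ) : ‖freeBack t n‖ = 1 := by
  rw [freeBack, show Complex.I * (4 * (Real.pi : ℂ) ^ 2 * (n : ℂ) ^ 2) * (t : ℂ)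
    = ((4 * Real.pi ^ 2 * (n : ℝ) ^ 2 * t : ℝ) : ℂ) * Complex.I by push_cast; ring]
  exact Complex.norm_exp_ofReal_mul_I _

/-- In the interaction picture the linear part of the equation cancels, and only the cubic term
contributes to the time derivative. -/
theorem IsNLSSolution.hasDerivAt_profile {s : ℝ} (hs : 2 ≤ s) {z : ℝ → ℤ → ℂ} {z₀ : ℤ → ℂ}
    (h : IsNLSSolution s z z₀) (t : ℝ) (n : ℤ) :
    HasDerivAt (fun t => freeBack t n * z t n)
      (freeBack t n * (-2 * Complex.I * NLterm (z t) n)) t := by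
  obtain ⟨-, hin, -, z', hin', hder, -, heq⟩ := h
  have hz : HasDerivAt (fun t => z t n) (z' t n) t :=
    (hder t).hasDerivAt_coeff (by linarith) (fun t => (hnorm_mono (by linarith) (hin t)).1)
      (hin' t) n
  have hE := ((hasDerivAt_id t).ofReal_comp.const_mul
    (Complex.I * (4 * (Real.pi : ℂ) ^ 2 * (n : ℂ) ^ 2))).cexp
  refine (hE.mul hz).congr_deriv ?_
  simp only [freeBack, heq, id]
  push_cast
  ring

theorem l2sq_le (x : ℤ → ℂ) (hx : InH 1 x) : l2sq x ≤ hnorm 1 x ^ 2 := by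
  have h0 : l2sq x = hnorm 0 x ^ 2 := by
    rw [hnorm_sq]; simp [l2sq, sobTerm]
  rw [h0]
  exact pow_le_pow_left₀ (hnorm_nonneg _ _) (hnorm_mono zero_le_one hx).2 2

theorem l2sq_nonneg (x : ℤ → ℂ) : 0 ≤ l2sq x := tsum_nonneg fun _ => by positivity

/-- If the `H¹` norm stays below `a` and the `H^s` norm below `M` up to time `τ`, then the solution
stays within `O(a² M |τ|)` of the free flow in `H^s`. -/
theorem duhamel_bound {s C a M : ℝ} (hs : 2 ≤ s) (hC : 0 < C) (ha : 0 < a) (hM : 0 < M)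
    (hNL : ∀ z : ℤ → ℂ, InH 1 z → InH s z →
      InH s (NLterm z) ∧ hnorm s (NLterm z) ≤ C * hnorm 1 z ^ 2 * hnorm s z)
    {z : ℝ → ℤ → ℂ} {z₀ : ℤ → ℂ} (h : IsNLSSolution s z z₀) {τ : ℝ}
    (hb : ∀ t ∈ Set.uIcc 0 τ, hnorm 1 (z t) ≤ a ∧ hnorm s (z t) ≤ M) :
    InH s (fun n => freeBack τ n * z τ n - z₀ n) ∧
      hnorm s (fun n => freeBack τ n * z τ n - z₀ n) ≤ 2 * (C * a ^ 2 * M) * |τ| := by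
  have := hnorm_sub_le_of_deriv (s := s) (B := 2 * (C * a ^ 2 * M)) (by positivity) (τ := τ)
    (h.hasDerivAt_profile hs) fun t ht => ?_
  · simpa [freeBack, h.1] using this
  · obtain ⟨hb1, hbs⟩ := hb t ht
    have hin := h.2.1 t
    obtain ⟨hi, hle⟩ := hNL (z t) (hnorm_mono (by linarith) hin).1 hin
    have hn : ∀ n, ‖freeBack t n * (-2 * Complex.I * NLterm (z t) n)‖ = ‖2 * NLterm (z t) n‖ := by
      intro n
      simp [norm_freeBack]
    have h2 := hnorm_const_mul 2 hi
    refine ⟨h2.1.congr_norm hn, ?_⟩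
    rw [hnorm_congr_norm hn]
    refine h2.2.trans ?_
    rw [Complex.norm_ofNat]
    gcongr
    refine hle.trans ?_
    have := hnorm_nonneg 1 (z t)
    have := hnorm_nonneg s (z t)
    gcongr

/-- The phase `e^{-ict}` of the modified flow moves the free flow by at most `c |t| ‖z₀‖` in `H^s`,
where `c = 4 ‖z₀‖²_{L²} ≤ 4 ‖z₀‖²_{H¹}`. -/
theorem hnorm_sub_wflow_le {s : ℝ} (hs : 1 ≤ s) {x z₀ : ℤ → ℂ} (t : ℝ) (hz₀ : InH s z₀)
    (hd : InH s (fun n => freeBack t n * x n - z₀ n)) :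
    hnorm s (fun n => x n - wflow z₀ t n) ≤
      hnorm s (fun n => freeBack t n * x n - z₀ n) + 4 * hnorm 1 z₀ ^ 2 * |t| * hnorm s z₀ := by
  set e : ℂ := Complex.exp (Complex.I * ((-(4 * l2sq z₀ * t) : ℝ) : ℂ)) with he
  have hn : ∀ n, ‖x n - wflow z₀ t n‖ = ‖(freeBack t n * x n - z₀ n) - (e - 1) * z₀ n‖ := by
    intro n
    rw [← one_mul ‖x n - wflow z₀ t n‖, ← norm_freeBack t n, ← norm_mul]
    congr 1
    have h1 : freeBack t n *
        Complex.exp (-Complex.I * (4 * (Real.pi : ℂ) ^ 2 * (n : ℂ) ^ 2) * (t : ℂ)) = 1 := by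
      rw [freeBack, ← Complex.exp_add, ← Complex.exp_zero]
      congr 1; ring
    have h2 : Complex.exp (-Complex.I * (4 * (l2sq z₀ : ℂ)) * (t : ℂ)) = e := by
      rw [he]; congr 1; push_cast; ring
    rw [wflow, h2]
    linear_combination (-e * z₀ n) * h1
  rw [hnorm_congr_norm hn]
  have hm := hnorm_const_mul (e - 1) hz₀
  refine (hnorm_sub_le hd hm.1).2.trans ?_
  gcongr
  refine hm.2.trans ?_
  have := hnorm_nonneg s z₀
  gcongr
  refine Real.norm_exp_I_mul_ofReal_sub_one_le.trans ?_
  have hl := l2sq_le z₀ (hnorm_mono hs hz₀).1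
  rw [Real.norm_eq_abs, abs_neg, abs_mul, abs_of_nonneg (by have := l2sq_nonneg z₀; positivity)]
  gcongr

/-! ### Closing the continuity argument -/

/-- for `ε, M, T > 0` and `N ≥ 2` there is a positive integer `L` so that every
solution of dNLS with initial data `u₀ ∈ H^N`, `‖u₀‖_{H^N} ≤ M`, whose Fourier modes vanish
up to order `L`, satisfies `‖u(t) - w(t)‖_{H^N} ≤ ε` for all `t ∈ [-T, T]`. -/
theorem stmt5 (ε M T : ℝ) (hε : 0 < ε) (hM : 0 < M) (hT : 0 < T) (N : ℤ) (hN : 2 ≤ N) :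
    ∃ L : ℕ, 0 < L ∧
      ∀ (z : ℝ → ℤ → ℂ) (z₀ : ℤ → ℂ),
        IsNLSSolution (N : ℝ) z z₀ → hnorm (N : ℝ) z₀ ≤ M →
        (∀ n : ℤ, |n| ≤ (L : ℤ) → z₀ n = 0) →
        ∀ t ∈ Set.Icc (-T) T,
          hnorm (N : ℝ) (fun n => z t n - wflow z₀ t n) ≤ ε := by
  have hs : (2 : ℝ) ≤ (N : ℝ) := by exact_mod_cast hN
  generalize (N : ℝ) = s at hs ⊢
  obtain ⟨C, hC, hNL⟩ := exists_NL_bound s (by linarith)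
  set D := 2 * C * (M + 1) * T with hD
  have hD0 : 0 < D := by positivity
  -- `a` bounds the `H¹` norm throughout `[-T, T]`; the Duhamel term is then at most `D a²`.
  obtain ⟨a, ha, ha1, haD, haε⟩ : ∃ a : ℝ, 0 < a ∧ a ≤ 1 ∧ D * a ≤ 1 / 2 ∧ D * a ≤ ε / 2 := by
    have hm : 0 < min 1 ε := lt_min one_pos hε
    have h1 : D * (min 1 ε / (2 * (D + 1))) ≤ min 1 ε / 2 := by
      rw [mul_div_assoc', div_le_div_iff₀ (by positivity) (by positivity)]
      nlinarith
    refine ⟨min 1 ε / (2 * (D + 1)), by positivity, ?_, ?_, ?_⟩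
    · rw [div_le_one (by positivity)]
      linarith [min_le_left 1 ε]
    · linarith [min_le_left 1 ε]
    · linarith [min_le_right 1 ε]
  have hDa : D * a ^ 2 ≤ a / 2 := by nlinarith
  have hDε : D * a ^ 2 ≤ ε / 2 := by nlinarith
  -- `ρ` bounds the `H¹` norm of the initial data.
  obtain ⟨ρ, hρ, hρ1, hρa, hρε⟩ : ∃ ρ : ℝ, 0 < ρ ∧ ρ ≤ 1 ∧ ρ < a / 2 ∧ 4 * ρ * T * M ≤ ε / 2 := by
    refine ⟨min 1 (min (a / 4) (ε / (8 * T * M))), by positivity, min_le_left _ _, ?_, ?_⟩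
    · have : min 1 (min (a / 4) (ε / (8 * T * M))) ≤ a / 4 :=
        (min_le_right _ _).trans (min_le_left _ _)
      linarith
    · have : min 1 (min (a / 4) (ε / (8 * T * M))) ≤ ε / (8 * T * M) :=
        (min_le_right _ _).trans (min_le_right _ _)
      rw [le_div_iff₀ (by positivity)] at this
      linarith
  obtain ⟨L, hL⟩ := exists_nat_gt (M / ρ)
  have hL0 : (0 : ℝ) < L := lt_trans (by positivity) hL
  have hLpos : 0 < L := by exact_mod_cast hL0
  refine ⟨L, hLpos, fun z z₀ hz hz₀M hlow t ht => ?_⟩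
  have hz0 : z 0 = z₀ := hz.1
  have hin₀ : InH s z₀ := hz0 ▸ hz.2.1 0
  have hin₁ : InH 1 z₀ := (hnorm_mono (by linarith) hin₀).1
  have h1ρ : hnorm 1 z₀ ≤ ρ := by
    refine (hnorm_one_le_of_low_modes_zero hs hin₀ hLpos hlow).trans ?_
    calc 1 / (L : ℝ) * hnorm s z₀ ≤ 1 / L * M := by gcongr
      _ ≤ ρ := by
        rw [div_lt_iff₀ hρ] at hL
        rw [one_div_mul_eq_div, div_le_iff₀ hL0]
        linarith
  let f : ℝ → ℝ := fun t => max (hnorm 1 (z t) / a) (hnorm s (z t) / (M + 1))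
  have hf : Continuous f :=
    ((hz.2.2.1.continuous_hnorm (by linarith) hz.2.1).div_const a).max
      ((hz.2.2.1.continuous_hnorm le_rfl hz.2.1).div_const (M + 1))
  have hM1 : 0 < M + 1 := by linarith
  have hduh : ∀ τ, |τ| ≤ T → (∀ r ∈ Set.uIcc 0 τ, f r ≤ 1) →
      InH s (fun n => freeBack τ n * z τ n - z₀ n) ∧
        hnorm s (fun n => freeBack τ n * z τ n - z₀ n) ≤ D * a ^ 2 := by
    intro τ hτ hb
    have := duhamel_bound hs hC ha hM1 hNL hz fun t ht => by
      have := max_le_iff.1 (hb t ht)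
      rwa [div_le_one ha, div_le_one hM1] at this
    refine ⟨this.1, this.2.trans ?_⟩
    calc 2 * (C * a ^ 2 * (M + 1)) * |τ| ≤ 2 * (C * a ^ 2 * (M + 1)) * T := by gcongr
      _ = D * a ^ 2 := by rw [hD]; ring
  have hf0 : f 0 < 1 := by
    refine max_lt ?_ ?_
    · rw [hz0, div_lt_one ha]; linarith
    · rw [hz0, div_lt_one hM1]; linarith
  have htT : |t| ≤ T := abs_le.2 ht
  have hboot := bootstrap hf hf0 (fun τ hτ hb => by
    obtain ⟨hdin, hdle⟩ := hduh τ hτ hb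
    have hnorm_eq : ∀ n, ‖z τ n‖ = ‖(freeBack τ n * z τ n - z₀ n) + z₀ n‖ := fun n => by
      rw [sub_add_cancel, norm_mul, norm_freeBack, one_mul]
    have hd1 := hnorm_mono (s := 1) (by linarith) hdin
    refine max_lt ?_ ?_
    · rw [div_lt_one ha, hnorm_congr_norm hnorm_eq]
      linarith [(hnorm_add_le hd1.1 hin₁).2, hd1.2]
    · rw [div_lt_one hM1, hnorm_congr_norm hnorm_eq]
      linarith [(hnorm_add_le hdin hin₀).2]) htT
  obtain ⟨hdin, hdle⟩ := hduh t htT hboot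
  have hfin := hnorm_sub_wflow_le (by linarith) t hin₀ hdin
  have hphase : 4 * hnorm 1 z₀ ^ 2 * |t| * hnorm s z₀ ≤ ε / 2 := by
    have := hnorm_nonneg 1 z₀
    have := hnorm_nonneg s z₀
    calc 4 * hnorm 1 z₀ ^ 2 * |t| * hnorm s z₀ ≤ 4 * ρ ^ 2 * T * M := by gcongr
      _ ≤ 4 * ρ * T * M := by
        gcongr
        nlinarith
      _ ≤ ε / 2 := hρε
  linarith

end
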